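/- Poisson GLM with log link: Let Q = {Pois(λ) : λ ∈ (0, ∞)} with counting densities q_λ(y) = e^{−λ} λ^y / y! on y ∈ ℕ, which has Fisher information I^Q_λ = 1/λ, and let ℓ(θ) = e^θ be the log link. Let β ∈ ℝ^p and let K be a probability measure on ℝ^p such that ∫ e^{|x|(|β| + δ)} |x|² K(dx) < ∞ for some δ > 0. Then the Poisson GLM P = {P_β(dx, dy) = Pois(e^{xᵀβ})(dy) K(dx)} is continuously L₂ differentiable at β. -/

import Mathlib

open MeasureTheory Filter Topology

noncomputable section

/-- The squared `L²(ν)` error appearing in the defining expansion of `L₂`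
differentiability of a dominated parametric family with `ν`-densities `q ϑ`
and candidate score (`L₂` derivative) `Λ` at `ϑ`. -/
def sqErr {Ωs : Type*} [MeasurableSpace Ωs] {ι : Type*} [Fintype ι]
    (ν : Measure Ωs) (q : (ι → ℝ) → Ωs → ℝ) (ϑ : ι → ℝ) (Λ : Ωs → ι → ℝ)
    (h : ι → ℝ) : ℝ :=
  ∫ y, (Real.sqrt (q (ϑ + h) y) -
      Real.sqrt (q ϑ y) * (1 + (1 / 2) * ∑ i, Λ y i * h i)) ^ 2 ∂ν

/-- `L₂` differentiability at `ϑ` with score `Λ ∈ L₂(Q_ϑ)`: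
`‖√(dQ_{ϑ+h}) - √(dQ_ϑ)(1 + ½ Λᵀ h)‖_{L₂(ν)} = o(|h|)` as `h → 0`. -/
def IsL2Diff {Ωs : Type*} [MeasurableSpace Ωs] {ι : Type*} [Fintype ι]
    (ν : Measure Ωs) (q : (ι → ℝ) → Ωs → ℝ) (ϑ : ι → ℝ) (Λ : Ωs → ι → ℝ) : Prop :=
  Integrable (fun y => (∑ i, Λ y i ^ 2) * q ϑ y) ν ∧
    (fun h : ι → ℝ => sqErr ν q ϑ Λ h) =o[𝓝 0] fun h => ‖h‖ ^ 2

/-- Continuous `L₂` differentiability at `ϑ` with score family `Λ`: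
`L₂` differentiability at `ϑ` together with
`sup_{|t| ≤ 1} ‖√(dQ_{ϑ+h}) Λ_{ϑ+h}ᵀ t - √(dQ_ϑ) Λ_ϑᵀ t‖_{L₂(ν)} → 0` as `h → 0`. -/
def IsContL2Diff {Ωs : Type*} [MeasurableSpace Ωs] {ι : Type*} [Fintype ι]
    (ν : Measure Ωs) (q : (ι → ℝ) → Ωs → ℝ) (Λ : (ι → ℝ) → Ωs → ι → ℝ)
    (ϑ : ι → ℝ) : Prop :=
  IsL2Diff ν q ϑ (Λ ϑ) ∧
    Tendsto (fun h : ι → ℝ => ⨆ t : {t : ι → ℝ // ‖t‖ ≤ 1},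
        ∫ y, (Real.sqrt (q (ϑ + h) y) * (∑ i, Λ (ϑ + h) y i * t.1 i) -
          Real.sqrt (q ϑ y) * (∑ i, Λ ϑ y i * t.1 i)) ^ 2 ∂ν)
      (𝓝 0) (𝓝 0)

/-- Counting density of the Poisson distribution with mean `l`. -/
def poisPdf (l : ℝ) (y : ℕ) : ℝ := Real.exp (-l) * l ^ y / (Nat.factorial y)

/-! View `θ ↦ √(dP_θ)` as a map into `L₂`. Its gradient is `½ √(dP_θ) Λ_θ`, and the squared `L₂`
norm of `√(dP_θ) Λ_θ` is the trace of the Fisher information. When the densities are smooth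
pointwise, the gradient converges pointwise as `θ → ϑ`; if the Fisher information is moreover
continuous at `ϑ`, the norms converge too, and then (Riesz–Scheffé) the gradient converges in `L₂`.
The remainder of the first-order expansion is an average of gradient differences over a segment,
so it is `o(|h|)` (Hájek, Le Cam).

For a generalized linear model the trace of the Fisher information at `β` is
`∫ I(xᵀβ) |x|² K(dx)`, where `I` is the Fisher information of the error family in the linear
predictor. For Poisson errors with log link `I(θ) = e^θ`, the variance of `Pois(e^θ)`, and
`e^{xᵀβ'} ≤ e^{xᵀβ + δ|x|}` for `|β' - β| < δ`, so continuity in `β` is dominated convergence. -/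

open scoped ENNReal RealInnerProductSpace

section ConvergenceOfIntegrals

variable {α κ : Type*} [MeasurableSpace α] {μ : Measure α} {l : Filter κ}
  [l.IsCountablyGenerated]

lemma tendsto_lintegral_min_of_tendsto {F : κ → α → ℝ≥0∞} {f g : α → ℝ≥0∞}
    (hF : ∀ n, AEMeasurable (F n) μ) (hg : AEMeasurable g μ)
    (hFf : ∀ᵐ a ∂μ, Tendsto (fun n => F n a) l (𝓝 (f a))) (hfg : ∀ᵐ a ∂μ, f a ≤ g a)
    (hfin : ∫⁻ a, g a ∂μ ≠ ∞) :
    Tendsto (fun n => ∫⁻ a, min (F n a) (g a) ∂μ) l (𝓝 (∫⁻ a, f a ∂μ)) := by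
  refine tendsto_lintegral_filter_of_dominated_convergence' g
    (.of_forall fun n => (hF n).min hg) (.of_forall fun n => .of_forall fun a => min_le_right _ _)
    hfin ?_
  filter_upwards [hFf, hfg] with a ha hle
  simpa [hle] using ha.min (tendsto_const_nhds (x := g a))

lemma tendsto_lintegral_tsub_zero_of_tendsto_lintegral {G : κ → α → ℝ≥0∞} {g : α → ℝ≥0∞}
    (hG : ∀ n, AEMeasurable (G n) μ) (hg : AEMeasurable g μ)
    (hGg : ∀ᵐ a ∂μ, Tendsto (fun n => G n a) l (𝓝 (g a)))
    (hintegral : Tendsto (fun n => ∫⁻ a, G n a ∂μ) l (𝓝 (∫⁻ a, g a ∂μ)))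
    (hfin : ∫⁻ a, g a ∂μ ≠ ∞) :
    Tendsto (fun n => ∫⁻ a, (G n a - g a) ∂μ) l (𝓝 0) := by
  have hmin := tendsto_lintegral_min_of_tendsto hG hg hGg (.of_forall fun _ => le_rfl) hfin
  have hsplit (n : κ) :
      ∫⁻ a, (G n a - g a) ∂μ = ∫⁻ a, G n a ∂μ - ∫⁻ a, min (G n a) (g a) ∂μ := by
    have hmin_fin : ∫⁻ a, min (G n a) (g a) ∂μ ≠ ∞ :=
      ne_top_of_le_ne_top hfin (lintegral_mono fun a => min_le_right _ _)
    rw [← lintegral_sub' ((hG n).min hg) hmin_fin (.of_forall fun a => min_le_left _ _)]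
    refine lintegral_congr fun a => ?_
    rcases le_total (G n a) (g a) with h | h <;> simp [h, tsub_eq_zero_of_le]
  simpa only [hsplit, tsub_self] using ENNReal.Tendsto.sub hintegral hmin (.inl hfin)

-- Pratt's form of dominated convergence: cutting `F n` off at `g` costs at most `G n - g`.
lemma tendsto_lintegral_of_le_of_tendsto_lintegral [l.NeBot]
    {F G : κ → α → ℝ≥0∞} {f g : α → ℝ≥0∞}
    (hF : ∀ n, AEMeasurable (F n) μ) (hG : ∀ n, AEMeasurable (G n) μ) (hg : AEMeasurable g μ)
    (hFG : ∀ n a, F n a ≤ G n a)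
    (hFf : ∀ᵐ a ∂μ, Tendsto (fun n => F n a) l (𝓝 (f a)))
    (hGg : ∀ᵐ a ∂μ, Tendsto (fun n => G n a) l (𝓝 (g a)))
    (hintegral : Tendsto (fun n => ∫⁻ a, G n a ∂μ) l (𝓝 (∫⁻ a, g a ∂μ)))
    (hfin : ∫⁻ a, g a ∂μ ≠ ∞) :
    Tendsto (fun n => ∫⁻ a, F n a ∂μ) l (𝓝 (∫⁻ a, f a ∂μ)) := by
  have hfg : ∀ᵐ a ∂μ, f a ≤ g a := by
    filter_upwards [hFf, hGg] with a haF haG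
    exact le_of_tendsto_of_tendsto' haF haG (hFG · a)
  have hmin := tendsto_lintegral_min_of_tendsto hF hg hFf hfg hfin
  have hcut (n : κ) (a : α) : F n a ≤ min (F n a) (g a) + (G n a - g a) := by
    rcases le_total (F n a) (g a) with h | h
    · simp [h]
    · simpa [h] using (hFG n a).trans le_add_tsub
  have hexcess := tendsto_lintegral_tsub_zero_of_tendsto_lintegral hG hg hGg hintegral hfin
  refine tendsto_of_tendsto_of_tendsto_of_le_of_le hmin
    (by simpa using hmin.add hexcess) (fun n => lintegral_mono fun a => min_le_left _ _) fun n => ?_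
  exact (lintegral_mono (hcut n)).trans_eq (lintegral_add_left' ((hF n).min hg) _)

lemma tendsto_lintegral_enorm_sub_rpow_of_tendsto_lintegral [l.NeBot]
    {E : Type*} [NormedAddCommGroup E] {p : ℝ} (hp : 1 ≤ p) {F : κ → α → E} {f : α → E}
    (hF : ∀ n, AEStronglyMeasurable (F n) μ) (hf : AEStronglyMeasurable f μ)
    (hFf : ∀ᵐ a ∂μ, Tendsto (fun n => F n a) l (𝓝 (f a)))
    (hintegral : Tendsto (fun n => ∫⁻ a, ‖F n a‖ₑ ^ p ∂μ) l (𝓝 (∫⁻ a, ‖f a‖ₑ ^ p ∂μ)))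
    (hfin : ∫⁻ a, ‖f a‖ₑ ^ p ∂μ ≠ ∞) :
    Tendsto (fun n => ∫⁻ a, ‖F n a - f a‖ₑ ^ p ∂μ) l (𝓝 0) := by
  have hp0 : 0 < p := zero_lt_one.trans_le hp
  set C : ℝ≥0∞ := 2 ^ (p - 1)
  have hC : C ≠ ∞ := ENNReal.rpow_ne_top_of_nonneg (sub_nonneg.2 hp) (by simp)
  have hbound_integral (u : α → E) : ∫⁻ a, C * (‖u a‖ₑ ^ p + ‖f a‖ₑ ^ p) ∂μ =
      C * (∫⁻ a, ‖u a‖ₑ ^ p ∂μ + ∫⁻ a, ‖f a‖ₑ ^ p ∂μ) := by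
    rw [lintegral_const_mul' _ _ hC, lintegral_add_right' _ (hf.enorm.pow_const p)]
  have hdom (n : κ) (a : α) : ‖F n a - f a‖ₑ ^ p ≤ C * (‖F n a‖ₑ ^ p + ‖f a‖ₑ ^ p) := by
    grw [enorm_sub_le, ENNReal.rpow_add_le_mul_rpow_add_rpow _ _ hp]
  have hlim := tendsto_lintegral_of_le_of_tendsto_lintegral (μ := μ) (l := l) (f := 0)
    (G := fun n a => C * (‖F n a‖ₑ ^ p + ‖f a‖ₑ ^ p))
    (g := fun a => C * (‖f a‖ₑ ^ p + ‖f a‖ₑ ^ p))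
    (fun n => ((hF n).sub hf).enorm.pow_const p)
    (fun n => (((hF n).enorm.pow_const p).add (hf.enorm.pow_const p)).const_mul C)
    (((hf.enorm.pow_const p).add (hf.enorm.pow_const p)).const_mul C) hdom ?_ ?_ ?_ ?_
  · simpa using hlim
  · filter_upwards [hFf] with a ha
    simpa [hp0] using ((ha.sub_const (f a)).enorm).ennrpow_const p
  · filter_upwards [hFf] with a ha
    exact ENNReal.Tendsto.const_mul ((ha.enorm.ennrpow_const p).add_const _) (.inr hC)
  · simp only [hbound_integral]
    exact ENNReal.Tendsto.const_mul (hintegral.add_const _) (.inr hC)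
  · rw [hbound_integral]
    finiteness

end ConvergenceOfIntegrals

section TaylorRemainder

variable {E : Type*} [NormedAddCommGroup E]

lemma sq_lintegral_enorm_le_lintegral_enorm_sq {α : Type*} [MeasurableSpace α] {μ : Measure α}
    [IsProbabilityMeasure μ] {f : α → E} (hf : AEStronglyMeasurable f μ) :
    (∫⁻ a, ‖f a‖ₑ ∂μ) ^ 2 ≤ ∫⁻ a, ‖f a‖ₑ ^ 2 ∂μ := by
  have h := eLpNorm_le_eLpNorm_of_exponent_le (p := 1) (q := (2 : NNReal)) (by norm_num) hf
  grw [← eLpNorm_one_eq_lintegral_enorm, h]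
  simpa using (eLpNorm_nnreal_pow_eq_lintegral (μ := μ) (f := f) (p := 2) two_ne_zero).le

lemma enorm_taylor_remainder_sq_le [NormedSpace ℝ E] [CompleteSpace E] {f f' : ℝ → E}
    (hf : ∀ s, HasDerivAt f (f' s) s) (hf' : Continuous f') :
    ‖f 1 - f 0 - f' 0‖ₑ ^ 2 ≤ ∫⁻ s in Set.Ioc (0 : ℝ) 1, ‖f' s - f' 0‖ₑ ^ 2 := by
  have hprob : IsProbabilityMeasure (volume.restrict (Set.Ioc (0 : ℝ) 1)) := ⟨by simp⟩
  have hremainder : f 1 - f 0 - f' 0 = ∫ s in Set.Ioc (0 : ℝ) 1, (f' s - f' 0) := by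
    rw [← intervalIntegral.integral_of_le zero_le_one,
      intervalIntegral.integral_sub (hf'.intervalIntegrable _ _) (by simp),
      intervalIntegral.integral_eq_sub_of_hasDerivAt (fun s _ => hf s)
        (hf'.intervalIntegrable _ _)]
    simp
  grw [hremainder, enorm_integral_le_lintegral_enorm]
  exact sq_lintegral_enorm_le_lintegral_enorm_sq (hf'.sub continuous_const).aestronglyMeasurable

end TaylorRemainder

section RootScore

variable {Ω ι : Type*} [Fintype ι]

/-- The `L₂`-valued score `√(dQ_θ) Λ_θ`, which is twice the gradient of `√(dQ_θ)`. It takes values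
in Euclidean space so that its squared norm is the trace of the Fisher information density. -/
def rootScore (q : (ι → ℝ) → Ω → ℝ) (Λ : (ι → ℝ) → Ω → ι → ℝ) (θ : ι → ℝ) (z : Ω) :
    EuclideanSpace ℝ ι :=
  WithLp.toLp 2 (√(q θ z) • Λ θ z)

variable {q : (ι → ℝ) → Ω → ℝ} {Λ : (ι → ℝ) → Ω → ι → ℝ}

lemma inner_rootScore (θ t : ι → ℝ) (z : Ω) :
    ⟪rootScore q Λ θ z, WithLp.toLp 2 t⟫ = √(q θ z) * ∑ i, Λ θ z i * t i := by
  simp only [rootScore, PiLp.inner_apply, Pi.smul_apply, smul_eq_mul, RCLike.inner_apply,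
    conj_trivial, Finset.mul_sum]
  exact Finset.sum_congr rfl fun i _ => by ring

lemma norm_rootScore_sq {θ : ι → ℝ} {z : Ω} (hq : 0 ≤ q θ z) :
    ‖rootScore q Λ θ z‖ ^ 2 = (∑ i, Λ θ z i ^ 2) * q θ z := by
  simp only [rootScore, EuclideanSpace.norm_sq_eq, Pi.smul_apply, smul_eq_mul, Real.norm_eq_abs,
    sq_abs, mul_pow, Real.sq_sqrt hq, ← Finset.mul_sum, mul_comm]

lemma enorm_toLp_two_sq (t : ι → ℝ) :
    ‖WithLp.toLp 2 t‖ₑ ^ 2 = ENNReal.ofReal (∑ i, t i ^ 2) := by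
  rw [← ofReal_norm, ← ENNReal.ofReal_pow (norm_nonneg _), EuclideanSpace.norm_sq_eq]
  simp

lemma enorm_toLp_two_sq_le (t : ι → ℝ) :
    ‖WithLp.toLp 2 t‖ₑ ^ 2 ≤ Fintype.card ι * ‖t‖ₑ ^ 2 := by
  rw [enorm_toLp_two_sq, ← ofReal_norm, ← ENNReal.ofReal_pow (norm_nonneg _),
    ← ENNReal.ofReal_natCast, ← ENNReal.ofReal_mul (Nat.cast_nonneg _), ← nsmul_eq_mul]
  refine ENNReal.ofReal_le_ofReal (Finset.sum_le_card_nsmul _ _ _ fun i _ => ?_)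
  exact sq_le_sq' (neg_le_of_abs_le (norm_le_pi_norm t i)) (le_of_abs_le (norm_le_pi_norm t i))

lemma enorm_inner_toLp_two_sq_le (v : EuclideanSpace ℝ ι) (t : ι → ℝ) :
    ‖⟪v, WithLp.toLp 2 t⟫‖ₑ ^ 2 ≤ Fintype.card ι * ‖t‖ₑ ^ 2 * ‖v‖ₑ ^ 2 := by
  have hcs : ‖⟪v, WithLp.toLp 2 t⟫‖ₑ ≤ ‖v‖ₑ * ‖WithLp.toLp 2 t‖ₑ := by
    simp only [enorm_eq_nnnorm]
    exact_mod_cast nnnorm_inner_le_nnnorm (𝕜 := ℝ) v (WithLp.toLp 2 t)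
  grw [hcs, mul_pow, enorm_toLp_two_sq_le t, mul_comm]

lemma hasDerivAt_sqrt_along_line {z : Ω}
    (hderiv : ∀ θ h, HasLineDerivAt ℝ (fun θ' => √(q θ' z))
      (1 / 2 * ⟪rootScore q Λ θ z, WithLp.toLp 2 h⟫) θ h) (θ h : ι → ℝ) (s : ℝ) :
    HasDerivAt (fun s : ℝ => √(q (θ + s • h) z))
      (1 / 2 * ⟪rootScore q Λ (θ + s • h) z, WithLp.toLp 2 h⟫) s := by
  have hline : HasDerivAt (fun u : ℝ => √(q (θ + s • h + u • h) z))
      (1 / 2 * ⟪rootScore q Λ (θ + s • h) z, WithLp.toLp 2 h⟫) (s - s) := by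
    simpa only [sub_self, HasLineDerivAt] using hderiv (θ + s • h) h
  have hpoint (u : ℝ) : θ + s • h + (u - s) • h = θ + u • h := by module
  simpa only [hpoint] using hline.comp_sub_const s s

lemma enorm_sqrt_remainder_sq_le {z : Ω} (hcont : Continuous fun θ => rootScore q Λ θ z)
    (hderiv : ∀ θ h, HasLineDerivAt ℝ (fun θ' => √(q θ' z))
      (1 / 2 * ⟪rootScore q Λ θ z, WithLp.toLp 2 h⟫) θ h) (θ h : ι → ℝ) :
    ‖√(q (θ + h) z) - √(q θ z) * (1 + 1 / 2 * ∑ i, Λ θ z i * h i)‖ₑ ^ 2 ≤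
      Fintype.card ι * ‖h‖ₑ ^ 2 * ∫⁻ s in Set.Ioc (0 : ℝ) 1,
        ‖rootScore q Λ (θ + s • h) z - rootScore q Λ θ z‖ₑ ^ 2 := by
  have htaylor := enorm_taylor_remainder_sq_le (hasDerivAt_sqrt_along_line hderiv θ h)
    (by fun_prop)
  simp only [one_smul, zero_smul, add_zero] at htaylor
  have hexpand : √(q (θ + h) z) - √(q θ z) * (1 + 1 / 2 * ∑ i, Λ θ z i * h i) =
      √(q (θ + h) z) - √(q θ z) - 1 / 2 * ⟪rootScore q Λ θ z, WithLp.toLp 2 h⟫ := by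
    rw [inner_rootScore]
    ring
  rw [hexpand, ← lintegral_const_mul' _ _ (by finiteness)]
  refine htaylor.trans (lintegral_mono fun s => ?_)
  have hhalf : ‖(1 / 2 : ℝ)‖ₑ ≤ 1 := by
    rw [Real.enorm_eq_ofReal (by norm_num), ENNReal.ofReal_le_one]
    norm_num
  grw [← mul_sub, ← inner_sub_left, enorm_mul, hhalf, one_mul, enorm_inner_toLp_two_sq_le]

end RootScore

section LTwoDifferentiability

variable {Ω ι : Type*} [MeasurableSpace Ω] [Fintype ι] {ν : Measure Ω}
  {q : (ι → ℝ) → Ω → ℝ} {Λ : (ι → ℝ) → Ω → ι → ℝ} {ϑ : ι → ℝ}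

/-- The squared `L₂(ν)` distance between the fields `√(dQ_θ) Λ_θ` at two parameters. It is
`ℝ≥0∞`-valued, so it is meaningful without integrability assumptions. -/
def rootScoreSqDist (ν : Measure Ω) (q : (ι → ℝ) → Ω → ℝ) (Λ : (ι → ℝ) → Ω → ι → ℝ)
    (θ θ' : ι → ℝ) : ℝ≥0∞ :=
  ∫⁻ z, ‖rootScore q Λ θ' z - rootScore q Λ θ z‖ₑ ^ 2 ∂ν

lemma enorm_integral_score_diff_sq_le (θ θ' t : ι → ℝ) :
    ‖∫ z, (√(q θ' z) * (∑ i, Λ θ' z i * t i) - √(q θ z) * (∑ i, Λ θ z i * t i)) ^ 2 ∂ν‖ₑ ≤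
      Fintype.card ι * ‖t‖ₑ ^ 2 * rootScoreSqDist ν q Λ θ θ' := by
  simp only [← inner_rootScore, ← inner_sub_left]
  grw [enorm_integral_le_lintegral_enorm, rootScoreSqDist,
    ← lintegral_const_mul' _ _ (by finiteness)]
  refine lintegral_mono fun z => ?_
  grw [enorm_pow, enorm_inner_toLp_two_sq_le]

lemma tendsto_iSup_integral_score_diff_sq
    (hdist : Tendsto (fun h => rootScoreSqDist ν q Λ ϑ (ϑ + h)) (𝓝 0) (𝓝 0)) :
    Tendsto (fun h : ι → ℝ => ⨆ t : {t : ι → ℝ // ‖t‖ ≤ 1},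
        ∫ z, (√(q (ϑ + h) z) * (∑ i, Λ (ϑ + h) z i * t.1 i) -
          √(q ϑ z) * (∑ i, Λ ϑ z i * t.1 i)) ^ 2 ∂ν) (𝓝 0) (𝓝 0) := by
  have hbound : Tendsto (fun h => Fintype.card ι * rootScoreSqDist ν q Λ ϑ (ϑ + h))
      (𝓝 0) (𝓝 0) := by
    simpa using ENNReal.Tendsto.const_mul hdist (.inr (ENNReal.natCast_ne_top _))
  have hbound_real := (ENNReal.tendsto_toReal ENNReal.zero_ne_top).comp hbound
  have : Nonempty {t : ι → ℝ // ‖t‖ ≤ 1} := ⟨⟨0, by simp⟩⟩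
  refine squeeze_zero' (.of_forall fun h => Real.iSup_nonneg fun t => by positivity) ?_
    hbound_real
  filter_upwards [hbound.eventually_lt_const ENNReal.zero_lt_top] with h hfin
  refine ciSup_le fun ⟨t, ht⟩ => (le_abs_self _).trans ?_
  rw [← Real.norm_eq_abs, ← toReal_enorm]
  refine ENNReal.toReal_mono hfin.ne ((enorm_integral_score_diff_sq_le ϑ (ϑ + h) t).trans ?_)
  have ht' : ‖t‖ₑ ≤ 1 := by simpa [← ofReal_norm] using ht
  grw [ht', one_pow, mul_one]

lemma enorm_sqErr_le [SFinite ν] (hmeas : ∀ θ, Measurable (rootScore q Λ θ))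
    (hcont : ∀ z, Continuous fun θ => rootScore q Λ θ z)
    (hderiv : ∀ z θ h, HasLineDerivAt ℝ (fun θ' => √(q θ' z))
      (1 / 2 * ⟪rootScore q Λ θ z, WithLp.toLp 2 h⟫) θ h) (h : ι → ℝ) :
    ‖sqErr ν q ϑ (Λ ϑ) h‖ₑ ≤ Fintype.card ι * ‖h‖ₑ ^ 2 *
      ∫⁻ s in Set.Ioc (0 : ℝ) 1, rootScoreSqDist ν q Λ ϑ (ϑ + s • h) := by
  have hjoint : Measurable (Function.uncurry fun (s : ℝ) z => rootScore q Λ (ϑ + s • h) z) :=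
    measurable_uncurry_of_continuous_of_measurable
      (fun z => (hcont z).comp (by fun_prop)) fun s => hmeas _
  have hsq_joint : Measurable (Function.uncurry fun (s : ℝ) z =>
      ‖rootScore q Λ (ϑ + s • h) z - rootScore q Λ ϑ z‖ₑ ^ 2) :=
    ((hjoint.sub ((hmeas ϑ).comp measurable_snd)).enorm).pow_const 2
  simp only [rootScoreSqDist]
  rw [lintegral_lintegral_swap hsq_joint.aemeasurable, ← lintegral_const_mul' _ _ (by finiteness)]
  grw [sqErr, enorm_integral_le_lintegral_enorm]
  refine lintegral_mono fun z => ?_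
  grw [enorm_pow, enorm_sqrt_remainder_sq_le (hcont z) (hderiv z)]

lemma tendsto_lintegral_rootScoreSqDist_segment
    (hdist : Tendsto (fun h => rootScoreSqDist ν q Λ ϑ (ϑ + h)) (𝓝 0) (𝓝 0)) :
    Tendsto (fun h : ι → ℝ => ∫⁻ s in Set.Ioc (0 : ℝ) 1, rootScoreSqDist ν q Λ ϑ (ϑ + s • h))
      (𝓝 0) (𝓝 0) := by
  rw [ENNReal.tendsto_nhds_zero] at hdist ⊢
  intro ε hε
  obtain ⟨r, hr, hball⟩ := Metric.eventually_nhds_iff_ball.1 (hdist ε hε)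
  filter_upwards [Metric.ball_mem_nhds 0 hr] with h hh
  have hsegment (s : ℝ) (hs : s ∈ Set.Ioc (0 : ℝ) 1) : s • h ∈ Metric.ball 0 r :=
    (convex_ball 0 r).smul_mem_of_zero_mem (Metric.mem_ball_self hr) hh (Set.Ioc_subset_Icc_self hs)
  calc ∫⁻ s in Set.Ioc (0 : ℝ) 1, rootScoreSqDist ν q Λ ϑ (ϑ + s • h)
      ≤ ∫⁻ _ in Set.Ioc (0 : ℝ) 1, ε :=
        setLIntegral_mono measurable_const fun s hs => hball _ (hsegment s hs)
    _ = ε := by simp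

lemma isLittleO_sqErr [SFinite ν] (hmeas : ∀ θ, Measurable (rootScore q Λ θ))
    (hcont : ∀ z, Continuous fun θ => rootScore q Λ θ z)
    (hderiv : ∀ z θ h, HasLineDerivAt ℝ (fun θ' => √(q θ' z))
      (1 / 2 * ⟪rootScore q Λ θ z, WithLp.toLp 2 h⟫) θ h)
    (hdist : Tendsto (fun h => rootScoreSqDist ν q Λ ϑ (ϑ + h)) (𝓝 0) (𝓝 0)) :
    (fun h => sqErr ν q ϑ (Λ ϑ) h) =o[𝓝 0] fun h => ‖h‖ ^ 2 := by
  have hratio : Tendsto (fun h : ι → ℝ => Fintype.card ι *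
      ∫⁻ s in Set.Ioc (0 : ℝ) 1, rootScoreSqDist ν q Λ ϑ (ϑ + s • h)) (𝓝 0) (𝓝 0) := by
    simpa using ENNReal.Tendsto.const_mul (tendsto_lintegral_rootScoreSqDist_segment hdist)
      (.inr (ENNReal.natCast_ne_top _))
  refine Asymptotics.isLittleO_iff.2 fun c hc => ?_
  filter_upwards [ENNReal.tendsto_nhds_zero.1 hratio (.ofReal c) (by simpa)] with h hh
  rw [← ENNReal.ofReal_le_ofReal_iff (by positivity), ENNReal.ofReal_mul hc.le, ofReal_norm,
    ofReal_norm, enorm_pow, enorm_norm]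
  grw [enorm_sqErr_le hmeas hcont hderiv, mul_right_comm, hh]

theorem isContL2Diff_of_continuousAt_lintegral_rootScore_sq [SFinite ν] (hq : ∀ z, 0 ≤ q ϑ z)
    (hmeas : ∀ θ, Measurable (rootScore q Λ θ))
    (hcont : ∀ z, Continuous fun θ => rootScore q Λ θ z)
    (hderiv : ∀ z θ h, HasLineDerivAt ℝ (fun θ' => √(q θ' z))
      (1 / 2 * ⟪rootScore q Λ θ z, WithLp.toLp 2 h⟫) θ h)
    (hfin : ∫⁻ z, ‖rootScore q Λ ϑ z‖ₑ ^ 2 ∂ν ≠ ∞)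
    (hfisher : ContinuousAt (fun θ => ∫⁻ z, ‖rootScore q Λ θ z‖ₑ ^ 2 ∂ν) ϑ) :
    IsContL2Diff ν q Λ ϑ := by
  have hshift : Tendsto (fun h => ϑ + h) (𝓝 0) (𝓝 ϑ) := by
    simpa using (continuous_const_add ϑ).tendsto 0
  have hdist : Tendsto (fun h => rootScoreSqDist ν q Λ ϑ (ϑ + h)) (𝓝 0) (𝓝 0) := by
    have hscheffe := tendsto_lintegral_enorm_sub_rpow_of_tendsto_lintegral (μ := ν)
      (l := 𝓝 (0 : ι → ℝ)) one_le_two (F := fun h => rootScore q Λ (ϑ + h))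
      (fun h => (hmeas _).aestronglyMeasurable) (hmeas ϑ).aestronglyMeasurable
      (.of_forall fun z => ((hcont z).tendsto ϑ).comp hshift)
    simp only [ENNReal.rpow_two] at hscheffe
    exact hscheffe (hfisher.tendsto.comp hshift) hfin
  have hintegrable : Integrable (fun z => (∑ i, Λ ϑ z i ^ 2) * q ϑ z) ν := by
    simp only [← norm_rootScore_sq (hq _)]
    refine ⟨((hmeas ϑ).norm.pow_const 2).aestronglyMeasurable, ?_⟩
    simpa only [HasFiniteIntegral, enorm_pow, enorm_norm] using hfin.lt_top
  exact ⟨⟨hintegrable, isLittleO_sqErr hmeas hcont hderiv hdist⟩,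
    tendsto_iSup_integral_score_diff_sq hdist⟩

end LTwoDifferentiability

section GeneralizedLinearModel

variable {Y ι : Type*} [Fintype ι]

/-- The density of the generalized linear model with error densities `q θ`, `θ` being the linear
predictor. The link is absorbed into `q`, and the model is dominated by the product of the design
distribution and the dominating measure of the errors. -/
def glmDensity (q : ℝ → Y → ℝ) (β : ι → ℝ) (z : (ι → ℝ) × Y) : ℝ :=
  q (∑ i, z.1 i * β i) z.2

/-- The score of the generalized linear model with error scores `s θ`, `θ` being the linear
predictor. -/
def glmScore (s : ℝ → Y → ℝ) (β : ι → ℝ) (z : (ι → ℝ) × Y) (i : ι) : ℝ :=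
  s (∑ j, z.1 j * β j) z.2 * z.1 i

/-- The Fisher information `∫ s_θ² q_θ dν` of a one-parameter family with `ν`-densities `q θ` and
scores `s θ`, as an element of `[0, ∞]`. -/
def fisherInfo [MeasurableSpace Y] (ν : Measure Y) (q s : ℝ → Y → ℝ) (θ : ℝ) : ℝ≥0∞ :=
  ∫⁻ y, ‖√(q θ y) * s θ y‖ₑ ^ 2 ∂ν

variable {q s : ℝ → Y → ℝ}

lemma rootScore_glm (β : ι → ℝ) (z : (ι → ℝ) × Y) :
    rootScore (glmDensity q) (glmScore s) β z =
      (√(q (∑ i, z.1 i * β i) z.2) * s (∑ i, z.1 i * β i) z.2) • WithLp.toLp 2 z.1 := by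
  ext i
  simp [rootScore, glmDensity, glmScore, mul_assoc]

lemma hasLineDerivAt_sqrt_glmDensity
    (hderiv : ∀ y θ, HasDerivAt (fun θ' => √(q θ' y)) (1 / 2 * (√(q θ y) * s θ y)) θ)
    (z : (ι → ℝ) × Y) (β h : ι → ℝ) :
    HasLineDerivAt ℝ (fun β' => √(glmDensity q β' z))
      (1 / 2 * ⟪rootScore (glmDensity q) (glmScore s) β z, WithLp.toLp 2 h⟫) β h := by
  have hpredictor : HasDerivAt (fun u : ℝ => ∑ i, z.1 i * (β + u • h) i) (∑ i, z.1 i * h i) 0 := by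
    refine HasDerivAt.fun_sum fun i _ => ?_
    simpa using (((hasDerivAt_id (0 : ℝ)).mul_const (h i)).const_add (β i)).const_mul (z.1 i)
  refine ((hderiv z.2 (∑ i, z.1 i * β i)).comp_of_eq 0 hpredictor (by simp)).congr_deriv ?_
  rw [inner_rootScore]
  simp only [glmDensity, glmScore, Finset.mul_sum]
  exact Finset.sum_congr rfl fun i _ => by ring

variable [MeasurableSpace Y] {ν : Measure Y} [SFinite ν] {K : Measure (ι → ℝ)} {β : ι → ℝ}

lemma measurable_rootScore_glm (hcont : ∀ y, Continuous fun θ => √(q θ y) * s θ y)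
    (hmeas : ∀ θ, Measurable fun y => √(q θ y) * s θ y) (β : ι → ℝ) :
    Measurable (rootScore (glmDensity q) (glmScore s) β) := by
  have hjoint : Measurable (Function.uncurry fun θ y => √(q θ y) * s θ y) :=
    measurable_uncurry_of_continuous_of_measurable hcont hmeas
  have hpredictor : Measurable fun z : (ι → ℝ) × Y => (∑ i, z.1 i * β i, z.2) := by fun_prop
  simp only [funext (rootScore_glm (q := q) (s := s) β)]
  exact (hjoint.comp hpredictor).smul ((WithLp.measurable_toLp 2 _).comp measurable_fst)

lemma lintegral_enorm_rootScore_glm_sq (hcont : ∀ y, Continuous fun θ => √(q θ y) * s θ y)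
    (hmeas : ∀ θ, Measurable fun y => √(q θ y) * s θ y) (β : ι → ℝ) :
    ∫⁻ z, ‖rootScore (glmDensity q) (glmScore s) β z‖ₑ ^ 2 ∂(K.prod ν) =
      ∫⁻ x, fisherInfo ν q s (∑ i, x i * β i) * ‖WithLp.toLp 2 x‖ₑ ^ 2 ∂K := by
  rw [lintegral_prod _
    ((measurable_rootScore_glm hcont hmeas β).enorm.pow_const 2).aemeasurable]
  refine lintegral_congr fun x => ?_
  simp only [rootScore_glm, enorm_smul, mul_pow, fisherInfo]
  exact lintegral_mul_const' _ _ (by finiteness)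

theorem isContL2Diff_glm [SFinite K] (hq : ∀ θ y, 0 ≤ q θ y)
    (hcont : ∀ y, Continuous fun θ => √(q θ y) * s θ y)
    (hmeas : ∀ θ, Measurable fun y => √(q θ y) * s θ y)
    (hderiv : ∀ y θ, HasDerivAt (fun θ' => √(q θ' y)) (1 / 2 * (√(q θ y) * s θ y)) θ)
    (hfisher : Continuous (fisherInfo ν q s)) {g : (ι → ℝ) → ℝ≥0∞}
    (hbound : ∀ᶠ β' in 𝓝 β, ∀ x,
      fisherInfo ν q s (∑ i, x i * β' i) * ‖WithLp.toLp 2 x‖ₑ ^ 2 ≤ g x)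
    (hg : ∫⁻ x, g x ∂K ≠ ∞) :
    IsContL2Diff (K.prod ν) (glmDensity q) (glmScore s) β := by
  have hinfo := lintegral_enorm_rootScore_glm_sq (ν := ν) (K := K) hcont hmeas
  refine isContL2Diff_of_continuousAt_lintegral_rootScore_sq (fun z => hq _ _)
    (measurable_rootScore_glm hcont hmeas) (fun z => ?_)
    (hasLineDerivAt_sqrt_glmDensity hderiv) ?_ ?_
  · simp only [rootScore_glm]
    exact ((hcont z.2).comp (by fun_prop)).smul continuous_const
  · rw [hinfo]
    exact ne_top_of_le_ne_top hg (lintegral_mono hbound.self_of_nhds)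
  · simp only [hinfo]
    refine tendsto_lintegral_filter_of_dominated_convergence g (.of_forall fun β' => ?_)
      (hbound.mono fun β' h => .of_forall h) hg (.of_forall fun x => ?_)
    · exact (hfisher.measurable.comp (by fun_prop)).mul
        ((WithLp.measurable_toLp 2 _).enorm.pow_const 2)
    · have hpredictor : Continuous fun β' : ι → ℝ => ∑ i, x i * β' i := by fun_prop
      exact ENNReal.Tendsto.mul_const ((hfisher.comp hpredictor).tendsto β) (.inr (by finiteness))

end GeneralizedLinearModel

section Poisson

lemma hasSum_descFactorial_mul_poisPdf (c : ℝ) (k : ℕ) :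
    HasSum (fun y : ℕ => y.descFactorial k * poisPdf c y) (c ^ k) := by
  have hvanish : ∑ y ∈ Finset.range k, (y.descFactorial k : ℝ) * poisPdf c y = 0 :=
    Finset.sum_eq_zero fun y hy => by
      simp [Nat.descFactorial_eq_zero_iff_lt.2 (Finset.mem_range.1 hy)]
  have hshift (n : ℕ) : ((n + k).descFactorial k : ℝ) * poisPdf c (n + k) =
      Real.exp (-c) * c ^ k * (c ^ n / n.factorial) := by
    have hfac : (n.factorial : ℝ) * (n + k).descFactorial k = (n + k).factorial := by
      exact_mod_cast Nat.add_sub_cancel (m := k) (n := n) ▸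
        Nat.factorial_mul_descFactorial (Nat.le_add_left k n)
    have hdesc : ((n + k).descFactorial k : ℝ) ≠ 0 := by
      exact_mod_cast (Nat.descFactorial_pos.2 (Nat.le_add_left k n)).ne'
    rw [poisPdf, ← hfac, pow_add]
    field_simp
  rw [← hasSum_nat_add_iff' k, hvanish, sub_zero]
  simp only [hshift]
  have hexp := NormedSpace.expSeries_div_hasSum_exp (𝔸 := ℝ) c
  rw [← Real.exp_eq_exp_ℝ] at hexp
  have hmass : Real.exp (-c) * c ^ k * Real.exp c = c ^ k := by
    rw [mul_right_comm, ← Real.exp_add, neg_add_cancel, Real.exp_zero, one_mul]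
  simpa only [hmass] using hexp.mul_left (Real.exp (-c) * c ^ k)

lemma hasSum_sq_sub_mul_poisPdf (c : ℝ) :
    HasSum (fun y : ℕ => ((y : ℝ) - c) ^ 2 * poisPdf c y) c := by
  have hmoments := ((hasSum_descFactorial_mul_poisPdf c 2).add
    ((hasSum_descFactorial_mul_poisPdf c 1).mul_left (1 - 2 * c))).add
    ((hasSum_descFactorial_mul_poisPdf c 0).mul_left (c ^ 2))
  convert hmoments using 1
  · ext y
    rw [Nat.cast_descFactorial_two, Nat.descFactorial_one, Nat.descFactorial_zero]
    push_cast
    ring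
  · ring

lemma poisPdf_pos {c : ℝ} (hc : 0 < c) (y : ℕ) : 0 < poisPdf c y := by
  unfold poisPdf
  positivity

lemma continuous_poisPdf (y : ℕ) : Continuous (poisPdf · y) := by
  unfold poisPdf
  fun_prop

lemma hasDerivAt_poisPdf_exp (y : ℕ) (θ : ℝ) :
    HasDerivAt (fun θ' => poisPdf (Real.exp θ') y)
      ((y - Real.exp θ) * poisPdf (Real.exp θ) y) θ := by
  have hexponential (θ : ℝ) :
      poisPdf (Real.exp θ) y = Real.exp (y * θ - Real.exp θ) / y.factorial := by
    rw [poisPdf, ← Real.exp_nat_mul, ← Real.exp_add, add_comm, ← sub_eq_add_neg]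
  simp only [hexponential]
  have hexponent : HasDerivAt (fun θ' : ℝ => y * θ' - Real.exp θ') (y - Real.exp θ) θ := by
    simpa using ((hasDerivAt_id θ).const_mul (y : ℝ)).fun_sub (Real.hasDerivAt_exp θ)
  exact (hexponent.exp.div_const (y.factorial : ℝ)).congr_deriv (by ring)

lemma hasDerivAt_sqrt_poisPdf_exp (y : ℕ) (θ : ℝ) :
    HasDerivAt (fun θ' => √(poisPdf (Real.exp θ') y))
      (1 / 2 * (√(poisPdf (Real.exp θ) y) * (y - Real.exp θ))) θ := by
  have hpos := poisPdf_pos (Real.exp_pos θ) y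
  refine ((hasDerivAt_poisPdf_exp y θ).sqrt hpos.ne').congr_deriv ?_
  field_simp
  rw [Real.sq_sqrt hpos.le, mul_comm]

lemma fisherInfo_poisson (θ : ℝ) :
    fisherInfo Measure.count (fun θ => poisPdf (Real.exp θ)) (fun θ (y : ℕ) => y - Real.exp θ) θ =
      ENNReal.ofReal (Real.exp θ) := by
  have hvar := hasSum_sq_sub_mul_poisPdf (Real.exp θ)
  have hpdf (y : ℕ) := (poisPdf_pos (Real.exp_pos θ) y).le
  have hterm (y : ℕ) : ‖√(poisPdf (Real.exp θ) y) * (y - Real.exp θ)‖ₑ ^ 2 =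
      ENNReal.ofReal ((y - Real.exp θ) ^ 2 * poisPdf (Real.exp θ) y) := by
    rw [← enorm_pow, mul_pow, Real.sq_sqrt (hpdf y), mul_comm,
      Real.enorm_eq_ofReal (mul_nonneg (sq_nonneg _) (hpdf y))]
  simp only [fisherInfo, hterm, lintegral_count]
  rw [← ENNReal.ofReal_tsum_of_nonneg (fun y => mul_nonneg (sq_nonneg _) (hpdf y)) hvar.summable,
    hvar.tsum_eq]

variable {ι : Type*} [Fintype ι]

lemma eventually_sum_mul_le_add_sqrt_mul (β : ι → ℝ) {δ : ℝ} (hδ : 0 < δ) :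
    ∀ᶠ β' in 𝓝 β, ∀ x : ι → ℝ,
      ∑ i, x i * β' i ≤ ∑ i, x i * β i + √(∑ i, x i ^ 2) * δ := by
  have hclose : ∀ᶠ β' in 𝓝 β, √(∑ i, (β' i - β i) ^ 2) < δ := by
    have hcont : Continuous fun β' : ι → ℝ => √(∑ i, (β' i - β i) ^ 2) := by fun_prop
    exact hcont.continuousAt.eventually_lt_const (by simpa)
  filter_upwards [hclose] with β' hβ' x
  calc ∑ i, x i * β' i = ∑ i, x i * β i + ∑ i, x i * (β' i - β i) := by
        rw [← Finset.sum_add_distrib]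
        exact Finset.sum_congr rfl fun i _ => by ring
    _ ≤ ∑ i, x i * β i + √(∑ i, x i ^ 2) * δ := by
        grw [Real.sum_mul_le_sqrt_mul_sqrt _ x fun i => β' i - β i, hβ']

lemma integrable_exp_sum_mul_add_of_integrable_exp_norm {K : Measure (ι → ℝ)} {β : ι → ℝ} {δ : ℝ}
    (hK : Integrable (fun x : ι → ℝ =>
      Real.exp (√(∑ i, x i ^ 2) * (√(∑ i, β i ^ 2) + δ)) * ∑ i, x i ^ 2) K) :
    Integrable (fun x : ι → ℝ =>
      Real.exp (∑ i, x i * β i + √(∑ i, x i ^ 2) * δ) * ∑ i, x i ^ 2) K := by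
  refine hK.mono' (by fun_prop) (.of_forall fun x => ?_)
  rw [Real.norm_of_nonneg (by positivity)]
  grw [Real.sum_mul_le_sqrt_mul_sqrt, mul_add]

theorem poisson_glm_log_continuously_L2_differentiable_general
    (K : Measure (ι → ℝ)) [SFinite K] (β : ι → ℝ)
    (hK : ∃ δ : ℝ, 0 < δ ∧ Integrable (fun x : ι → ℝ =>
      Real.exp (∑ i, x i * β i + √(∑ i, x i ^ 2) * δ) * ∑ i, x i ^ 2) K) :
    IsContL2Diff (K.prod (Measure.count : Measure ℕ))
      (fun β' z => poisPdf (Real.exp (∑ i, z.1 i * β' i)) z.2)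
      (fun β' z i => ((z.2 : ℝ) - Real.exp (∑ j, z.1 j * β' j)) * z.1 i) β := by
  obtain ⟨δ, hδ, hintegrable⟩ := hK
  have hpos (θ : ℝ) (y : ℕ) := poisPdf_pos (Real.exp_pos θ) y
  have hcont (y : ℕ) :
      Continuous fun θ => √(poisPdf (Real.exp θ) y) * (y - Real.exp θ) := by
    have := (continuous_poisPdf y).comp Real.continuous_exp
    fun_prop
  refine isContL2Diff_glm (q := fun θ => poisPdf (Real.exp θ)) (s := fun θ y => y - Real.exp θ)
    (fun θ y => (hpos θ y).le) hcont (fun θ => measurable_of_countable _)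
    hasDerivAt_sqrt_poisPdf_exp ?_ ?_ hintegrable.lintegral_lt_top.ne
  · simp only [funext fisherInfo_poisson]
    exact ENNReal.continuous_ofReal.comp Real.continuous_exp
  · filter_upwards [eventually_sum_mul_le_add_sqrt_mul β hδ] with β' hβ' x
    rw [fisherInfo_poisson, enorm_toLp_two_sq, ENNReal.ofReal_mul (by positivity)]
    gcongr
    exact hβ' x

end Poisson

/-- **Poisson GLM with log link.** For the Poisson error model `Pois(λ)`
(which has Fisher information `1/λ`) with log link `ℓ(θ) = e^θ`, if
`∫ e^{|x|(|β| + δ)} |x|² K(dx) < ∞` for some `δ > 0` (with `|·|` the Euclidean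
norm), then the Poisson GLM `P_β(dx,dy) = Pois(e^{xᵀβ})(dy) K(dx)`, with
densities relative to `K ⊗ counting` and scores `(x,y) ↦ (y - e^{xᵀβ}) x`,
is continuously `L₂` differentiable at `β`. -/
theorem poisson_glm_log_continuously_L2_differentiable
    {p : ℕ}
    (K : Measure (Fin p → ℝ)) [IsProbabilityMeasure K]
    (β : Fin p → ℝ)
    (hK : ∃ δ : ℝ, 0 < δ ∧
      Integrable (fun x : Fin p → ℝ =>
        Real.exp (Real.sqrt (∑ i, x i ^ 2) * (Real.sqrt (∑ i, β i ^ 2) + δ)) *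
          (∑ i, x i ^ 2)) K) :
    IsContL2Diff (K.prod (Measure.count : Measure ℕ))
      (fun β' (z : (Fin p → ℝ) × ℕ) => poisPdf (Real.exp (∑ i, z.1 i * β' i)) z.2)
      (fun β' (z : (Fin p → ℝ) × ℕ) i =>
        ((z.2 : ℝ) - Real.exp (∑ j, z.1 j * β' j)) * z.1 i)
      β := by
  obtain ⟨δ, hδ, hintegrable⟩ := hK
  exact poisson_glm_log_continuously_L2_differentiable_general K β
    ⟨δ, hδ, integrable_exp_sum_mul_add_of_integrable_exp_norm hintegrable⟩
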